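/- Let S : [0,T] → L(V,V′) be Lipschitz continuous with constant L in operator norm. Then there exists a bounded strongly measurable function Ṡ : [0,T] → L(V,V′) with ‖Ṡ(t)‖ ≤ L for all t, such that for every u ∈ V, the V′-valued function t ↦ S(t)u is differentiable a.e. with derivative Ṡ(t)u. -/

import Mathlib

open MeasureTheory Set Function

open Filter Topology TopologicalSpace
open scoped NNReal InnerProductSpace

/-!
The difference quotients of `S` at `t` are bounded by the Lipschitz constant, so they have a weak
limit `Ṡ(t)` along an ultrafilter finer than `𝓝[≠] t`. No measurable selection is needed:
wherever `t ↦ S(t)u` is differentiable, its derivative must be `Ṡ(t)u`. It remains to see that a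
Lipschitz curve `f` in a Hilbert space is differentiable almost everywhere. Its weak ultrafilter
derivative `g` is bounded, and each `⟪x, g⟫` is almost everywhere the derivative of the scalar
Lipschitz function `⟪x, f⟫`; since `f` lives in a separable closed subspace, `g` is strongly
measurable. Integrating the scalar derivatives gives `f t - f 0 = ∫ s in 0..t, g s`, and
Lebesgue's differentiation theorem applies.
-/

section UltrafilterLimits

variable {𝕜₁ 𝕜₂ 𝕜₃ E F G α : Type*} [NontriviallyNormedField 𝕜₁] [NontriviallyNormedField 𝕜₂]
  [NontriviallyNormedField 𝕜₃] {σ : 𝕜₁ →+* 𝕜₃} {τ : 𝕜₂ →+* 𝕜₃}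
  [NormedAddCommGroup E] [NormedSpace 𝕜₁ E] [NormedAddCommGroup F] [NormedSpace 𝕜₂ F]
  [NormedAddCommGroup G] [NormedSpace 𝕜₃ G] [ProperSpace G] {C : ℝ}

theorem exists_forall_tendsto_apply_of_norm_le [RingHomIsometric σ] (U : Ultrafilter α)
    {A : α → E →SL[σ] G} (hA : ∀ a, ‖A a‖ ≤ C) :
    ∃ B : E →SL[σ] G, ‖B‖ ≤ C ∧ ∀ x, Tendsto (fun a => A a x) U (𝓝 (B x)) := by
  obtain ⟨_, ⟨B, hB, rfl⟩, hlim⟩ :=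
    (ContinuousLinearMap.isCompact_image_coe_closedBall (0 : E →SL[σ] G) C).ultrafilter_le_nhds'
      (U.map fun a => ⇑(A a))
      (Ultrafilter.mem_map.2 (Eventually.of_forall fun a =>
        mem_image_of_mem _ (mem_closedBall_zero_iff.2 (hA a))))
  exact ⟨B, mem_closedBall_zero_iff.1 hB, tendsto_pi_nhds.1 hlim⟩

theorem exists_forall_tendsto_apply_apply_of_norm_le [RingHomIsometric σ] [RingHomIsometric τ]
    (U : Ultrafilter α) {A : α → E →SL[σ] F →SL[τ] G} (hA : ∀ a, ‖A a‖ ≤ C) :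
    ∃ B : E →SL[σ] F →SL[τ] G, ‖B‖ ≤ C ∧
      ∀ x y, Tendsto (fun a => A a x y) U (𝓝 (B x y)) := by
  have hC : 0 ≤ C := let ⟨a⟩ := U.nonempty_of_neBot; (norm_nonneg (A a)).trans (hA a)
  choose β hβ hlim using fun x => exists_forall_tendsto_apply_of_norm_le U fun a =>
    (A a).le_of_opNorm_le (hA a) x
  let B : E →ₛₗ[σ] F →SL[τ] G :=
    { toFun := β
      map_add' x x' := ContinuousLinearMap.ext fun y => tendsto_nhds_unique (hlim (x + x') y) <| by
        simpa only [map_add, add_apply] using (hlim x y).add (hlim x' y)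
      map_smul' c x := ContinuousLinearMap.ext fun y => tendsto_nhds_unique (hlim (c • x) y) <| by
        simpa only [map_smulₛₗ, smul_apply] using (hlim x y).const_smul (σ c) }
  exact ⟨B.mkContinuous C hβ, B.mkContinuous_norm_le hC hβ, hlim⟩

end UltrafilterLimits

section WeakDerivatives

theorem norm_slope_le_of_lipschitzWith {E : Type*} [SeminormedAddCommGroup E] [NormedSpace ℝ E]
    {C : ℝ≥0} {f : ℝ → E} (hf : LipschitzWith C f) (s t : ℝ) : ‖slope f s t‖ ≤ C := by
  rw [slope_def_module, norm_smul, norm_inv]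
  exact inv_mul_le_of_le_mul₀ (norm_nonneg _) C.coe_nonneg
    ((hf.norm_sub_le t s).trans_eq (mul_comm _ _))

variable {𝕜 E V H : Type*} [RCLike 𝕜] [NormedAddCommGroup E] [NormedSpace 𝕜 E]
  [NormedAddCommGroup V] [NormedSpace 𝕜 V] [NormedAddCommGroup H] [InnerProductSpace ℝ H]
  [CompleteSpace H] {C : ℝ≥0}

theorem exists_operator_deriv_of_lipschitzWith {S : ℝ → E →L[𝕜] V →L⋆[𝕜] 𝕜}
    (hS : LipschitzWith C S) :
    ∃ S' : ℝ → E →L[𝕜] V →L⋆[𝕜] 𝕜, (∀ t, ‖S' t‖ ≤ C) ∧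
      ∀ u t, DifferentiableAt ℝ (fun s => S s u) t → HasDerivAt (fun s => S s u) (S' t u) t := by
  choose S' hbound hlim using fun t => exists_forall_tendsto_apply_apply_of_norm_le
    (.of (𝓝[≠] t)) (norm_slope_le_of_lipschitzWith hS t)
  refine ⟨S', hbound, fun u t hu => ?_⟩
  have hslope : Tendsto (fun s => slope S t s u) (Ultrafilter.of (𝓝[≠] t))
      (𝓝 (deriv (fun s => S s u) t)) :=
    (hasDerivAt_iff_tendsto_slope.1 hu.hasDerivAt).mono_left (Ultrafilter.of_le _)
  have hderiv : deriv (fun s => S s u) t = S' t u := ContinuousLinearMap.ext fun v =>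
    tendsto_nhds_unique (((ContinuousLinearMap.apply' 𝕜 (starRingEnd 𝕜) v).continuous.tendsto
      _).comp hslope) (hlim t u v)
  exact hderiv ▸ hu.hasDerivAt

theorem exists_weak_deriv_of_lipschitzWith {f : ℝ → H} (hf : LipschitzWith C f) :
    ∃ g : ℝ → H, (∀ t, ‖g t‖ ≤ C) ∧
      ∀ x, ∀ᵐ t, HasDerivAt (fun s => ⟪x, f s⟫_ℝ) ⟪x, g t⟫_ℝ t := by
  have hslope (t s : ℝ) : ‖innerSL ℝ (slope f t s)‖ ≤ C :=
    (innerSL_apply_norm ℝ _).trans_le (norm_slope_le_of_lipschitzWith hf t s)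
  choose φ hφ hlim using fun t => exists_forall_tendsto_apply_of_norm_le
    (.of (𝓝[≠] t)) (hslope t)
  refine ⟨fun t => (InnerProductSpace.toDual ℝ H).symm (φ t), fun t => ?_, fun x => ?_⟩
  · rw [LinearIsometryEquiv.norm_map]
    exact hφ t
  have hlip : LipschitzWith (‖innerSL ℝ x‖₊ * C) fun s => ⟪x, f s⟫_ℝ :=
    (innerSL ℝ x).lipschitz.comp hf
  filter_upwards [hlip.ae_differentiableAt_real] with t ht
  have hinner (s : ℝ) : slope (fun s => ⟪x, f s⟫_ℝ) t s = innerSL ℝ (slope f t s) x := by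
    simp only [slope_def_module, innerSL_apply_apply, real_inner_comm x, real_inner_smul_right,
      inner_sub_right, smul_eq_mul]
  rw [real_inner_comm, InnerProductSpace.toDual_symm_apply, tendsto_nhds_unique (hlim t x)
    (((hasDerivAt_iff_tendsto_slope.1 ht.hasDerivAt).mono_left (Ultrafilter.of_le _)).congr
      hinner)]
  exact ht.hasDerivAt

end WeakDerivatives

-- Lusin–Souslin: the continuous injection of a Polish space into `ℕ → 𝕜` given by the inner
-- products with a dense sequence is a measurable embedding.
theorem aestronglyMeasurable_of_forall_inner {𝕜 H α : Type*} [RCLike 𝕜] [NormedAddCommGroup H]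
    [InnerProductSpace 𝕜 H] [CompleteSpace H] [SeparableSpace H] {_ : MeasurableSpace α}
    {μ : Measure α} {g : α → H} (hg : ∀ x, AEStronglyMeasurable (fun a => ⟪x, g a⟫_𝕜) μ) :
    AEStronglyMeasurable g μ := by
  borelize H
  have hembedding : MeasurableEmbedding fun (y : H) (n : ℕ) => ⟪denseSeq H n, y⟫_𝕜 :=
    Continuous.measurableEmbedding (by fun_prop) fun _ _ h =>
      (denseRange_denseSeq H).eq_of_inner_right 𝕜 (congrFun h)
  exact (hembedding.aemeasurable_comp_iff.1
    (aemeasurable_pi_iff.2 fun n => (hg (denseSeq H n)).aemeasurable)).aestronglyMeasurable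

section AEDifferentiability

variable {H : Type*} [NormedAddCommGroup H] [InnerProductSpace ℝ H] [CompleteSpace H]
  {C : ℝ≥0} {f g : ℝ → H}

theorem aestronglyMeasurable_of_forall_ae_hasDerivAt_inner [SeparableSpace H]
    (hg : ∀ x, ∀ᵐ t, HasDerivAt (fun s => ⟪x, f s⟫_ℝ) ⟪x, g t⟫_ℝ t) :
    AEStronglyMeasurable g :=
  aestronglyMeasurable_of_forall_inner (𝕜 := ℝ) fun x =>
    (aestronglyMeasurable_deriv (fun s => ⟪x, f s⟫_ℝ) volume).congr
      ((hg x).mono fun _ ht => ht.deriv)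

theorem integral_eq_sub_of_forall_ae_hasDerivAt_inner (hf : LipschitzWith C f)
    (hgi : LocallyIntegrable g)
    (hg : ∀ x, ∀ᵐ t, HasDerivAt (fun s => ⟪x, f s⟫_ℝ) ⟪x, g t⟫_ℝ t) (a b : ℝ) :
    ∫ t in a..b, g t = f b - f a := by
  refine ext_inner_left ℝ fun x => ?_
  have hlip : LipschitzWith (‖innerSL ℝ x‖₊ * C) fun s => ⟪x, f s⟫_ℝ :=
    (innerSL ℝ x).lipschitz.comp hf
  calc ⟪x, ∫ t in a..b, g t⟫_ℝ
    _ = ∫ t in a..b, ⟪x, g t⟫_ℝ :=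
      ((innerSL ℝ x).intervalIntegral_comp_comm
        (hgi.integrableOn_isCompact isCompact_uIcc).intervalIntegrable).symm
    _ = ∫ t in a..b, deriv (fun s => ⟪x, f s⟫_ℝ) t :=
      intervalIntegral.integral_congr_ae ((hg x).mono fun _ ht _ => ht.deriv.symm)
    _ = ⟪x, f b⟫_ℝ - ⟪x, f a⟫_ℝ :=
      hlip.lipschitzOnWith.absolutelyContinuousOnInterval.integral_deriv_eq_sub
    _ = ⟪x, f b - f a⟫_ℝ := (inner_sub_right _ _ _).symm

theorem ae_differentiableAt_of_lipschitzWith_of_separableSpace [SeparableSpace H]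
    (hf : LipschitzWith C f) : ∀ᵐ t, DifferentiableAt ℝ f t := by
  obtain ⟨g, hbound, hg⟩ := exists_weak_deriv_of_lipschitzWith hf
  have hgi : LocallyIntegrable g := (locallyIntegrable_const (C : ℝ)).mono
    (aestronglyMeasurable_of_forall_ae_hasDerivAt_inner hg)
    (Eventually.of_forall fun t => (hbound t).trans (le_abs_self _))
  have hfg : f = fun t => f 0 + ∫ s in (0 : ℝ)..t, g s := by
    funext t
    rw [integral_eq_sub_of_forall_ae_hasDerivAt_inner hf hgi hg, add_sub_cancel]
  filter_upwards [LocallyIntegrable.ae_hasDerivAt_integral hgi] with t ht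
  rw [hfg]
  exact ((ht 0).const_add (f 0)).differentiableAt

theorem ae_differentiableAt_of_lipschitzWith (hf : LipschitzWith C f) :
    ∀ᵐ t, DifferentiableAt ℝ f t := by
  let K : Submodule ℝ H := (Submodule.span ℝ (range f)).topologicalClosure
  have hsep : IsSeparable (K : Set H) := ((isSeparable_range hf.continuous).span (R := ℝ)).closure
  have : SeparableSpace K := hsep.separableSpace
  have : CompleteSpace K := (Submodule.isClosed_topologicalClosure _).completeSpace_coe
  let fK : ℝ → K := fun t =>
    ⟨f t, Submodule.le_topologicalClosure _ (Submodule.subset_span (mem_range_self t))⟩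
  have hfK : LipschitzWith C fK := hf
  filter_upwards [ae_differentiableAt_of_lipschitzWith_of_separableSpace hfK] with t ht
  exact K.subtypeL.differentiableAt.comp t ht

end AEDifferentiability

section Antidual

variable {𝕜 V : Type*} [RCLike 𝕜] [NormedAddCommGroup V] [InnerProductSpace 𝕜 V]

theorem norm_innerSLFlip_apply (x : V) : ‖innerSLFlip 𝕜 x‖ = ‖x‖ := by
  have hstar : innerSLFlip 𝕜 x =
      (starₗᵢ 𝕜 (E := 𝕜)).toLinearIsometry.toContinuousLinearMap ∘SL innerSL 𝕜 x := by
    ext y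
    simp
  rw [hstar, LinearIsometry.norm_toContinuousLinearMap_comp, innerSL_apply_norm]

variable [CompleteSpace V]

theorem innerSLFlip_surjective : Surjective (innerSLFlip 𝕜 : V →L[𝕜] V →L⋆[𝕜] 𝕜) := fun φ => by
  refine ⟨(InnerProductSpace.toDual 𝕜 V).symm ((starL 𝕜 (A := 𝕜)).toContinuousLinearMap ∘SL φ), ?_⟩
  ext y
  rw [innerSLFlip_apply_apply, ← inner_conj_symm, InnerProductSpace.toDual_symm_apply]
  simp

variable (𝕜 V) in
/-- The Riesz isomorphism `x ↦ (y ↦ ⟪y, x⟫)` of a Hilbert space onto its antidual, the space of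
continuous conjugate-linear functionals. Unlike `InnerProductSpace.toDual`, it is linear. -/
noncomputable def toAntidual : V ≃ₗᵢ[𝕜] V →L⋆[𝕜] 𝕜 :=
  .ofSurjective ⟨(innerSLFlip 𝕜).toLinearMap, norm_innerSLFlip_apply⟩ innerSLFlip_surjective

theorem ae_differentiableAt_antidual_of_lipschitzWith {C : ℝ≥0} {f : ℝ → V →L⋆[𝕜] 𝕜}
    (hf : LipschitzWith C f) : ∀ᵐ t, DifferentiableAt ℝ f t := by
  let _ := InnerProductSpace.rclikeToReal 𝕜 V
  have hlip : LipschitzWith (1 * C) ((toAntidual 𝕜 V).symm ∘ f) :=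
    (toAntidual 𝕜 V).symm.lipschitz.comp hf
  filter_upwards [ae_differentiableAt_of_lipschitzWith hlip] with t ht
  have hcomp := ((toAntidual 𝕜 V : V →L[𝕜] V →L⋆[𝕜] 𝕜).restrictScalars ℝ).differentiableAt.comp t ht
  exact hcomp.congr_of_eventuallyEq (.of_eq (funext fun s =>
    ((toAntidual 𝕜 V).apply_symm_apply (f s)).symm))

end Antidual

theorem lipschitzWith_IccExtend_domRestrict {X : Type*} [PseudoEMetricSpace X] {a b : ℝ}
    (hab : a ≤ b) {C : ℝ≥0} {f : ℝ → X} (hf : LipschitzOnWith C f (Icc a b)) :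
    LipschitzWith C (IccExtend hab ((Icc a b).domRestrict f)) :=
  mul_one C ▸ hf.to_restrict.comp (LipschitzWith.projIcc hab)

theorem stmt_3_general {𝕜 E V : Type*} [RCLike 𝕜] [NormedAddCommGroup E] [NormedSpace 𝕜 E]
    [NormedAddCommGroup V] [InnerProductSpace 𝕜 V] [CompleteSpace V]
    {a b : ℝ} (hab : a ≤ b) {C : ℝ≥0} {S : ℝ → E →L[𝕜] V →L⋆[𝕜] 𝕜}
    (hS : LipschitzOnWith C S (Icc a b)) :
    ∃ S' : ℝ → E →L[𝕜] V →L⋆[𝕜] 𝕜,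
      (∀ t ∈ Icc a b, ‖S' t‖ ≤ C) ∧
      (∀ u, AEStronglyMeasurable (fun t => S' t u) (volume.restrict (Ioc a b))) ∧
      ∀ u, ∀ᵐ t ∂volume.restrict (Ioo a b), HasDerivAt (fun s => S s u) (S' t u) t := by
  have hSext := lipschitzWith_IccExtend_domRestrict hab hS
  set Sext := IccExtend hab ((Icc a b).domRestrict S) with hSext_def
  obtain ⟨S', hbound, hS'⟩ := exists_operator_deriv_of_lipschitzWith hSext
  have hderiv (u : E) : ∀ᵐ t, HasDerivAt (fun s => Sext s u) (S' t u) t :=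
    have hlip := (ContinuousLinearMap.apply 𝕜 (V →L⋆[𝕜] 𝕜) u).lipschitz.comp hSext
    (ae_differentiableAt_antidual_of_lipschitzWith hlip).mono (hS' u)
  refine ⟨S', fun t _ => hbound t, fun u => ?_, fun u => ?_⟩
  · exact ((aestronglyMeasurable_deriv (fun s => Sext s u) volume).congr
      ((hderiv u).mono fun _ ht => ht.deriv)).restrict
  · filter_upwards [ae_restrict_of_ae (hderiv u), ae_restrict_mem measurableSet_Ioo] with t ht hmem
    refine ht.congr_of_eventuallyEq ?_
    filter_upwards [Icc_mem_nhds hmem.1 hmem.2] with s hs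
    rw [hSext_def, IccExtend_of_mem hab _ hs, domRestrict_apply]

/-- If `S : [0,T] → L(V,V′)` is Lipschitz with constant `L` in operator norm,
then there is a bounded, strongly measurable `Ṡ : [0,T] → L(V,V′)` with `‖Ṡ(t)‖ ≤ L`,
such that for every `u ∈ V` the function `t ↦ S(t)u` is differentiable a.e. on `(0,T)`
with derivative `Ṡ(t)u`. -/
theorem stmt_3 {𝕜 V : Type*} [RCLike 𝕜]
    [NormedAddCommGroup V] [InnerProductSpace 𝕜 V] [CompleteSpace V]
    (T L : ℝ) (hT : 0 < T) (hL : 0 ≤ L)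
    (S : ℝ → (V →L[𝕜] (V →SL[starRingEnd 𝕜] 𝕜)))
    (hS : ∀ s ∈ Icc (0:ℝ) T, ∀ t ∈ Icc (0:ℝ) T, ‖S t - S s‖ ≤ L * |t - s|) :
    ∃ S' : ℝ → (V →L[𝕜] (V →SL[starRingEnd 𝕜] 𝕜)),
      (∀ t ∈ Icc (0:ℝ) T, ‖S' t‖ ≤ L) ∧
      (∀ u : V, AEStronglyMeasurable (fun t => S' t u) (volume.restrict (Ioc 0 T))) ∧
      ∀ u : V, ∀ᵐ t ∂(volume.restrict (Ioo 0 T)),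
        HasDerivAt (fun s => S s u) (S' t u) t :=
  stmt_3_general (C := ⟨L, hL⟩) hT.le (.of_dist_le_mul fun s hs t ht => by
    rw [dist_eq_norm, Real.dist_eq]
    exact hS t ht s hs)
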